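/- Let G be a finite connected simple graph with at least 3 vertices. Then G is 3-colourable if and only if there exists a surjective homomorphism from the disjoint union of the adjacency relation of G with two copies of K1^ref to the disjoint union K3 ⊎ K1^ref ⊎ K1^ref. -/

import Mathlib

/-- The disjoint union of two binary relations, on the sum type. -/
def SumRel {α β : Type*} (r : α → α → Prop) (s : β → β → Prop) :
    α ⊕ β → α ⊕ β → Prop
  | Sum.inl x, Sum.inl y => r x y
  | Sum.inr x, Sum.inr y => s x y
  | _, _ => False

/-!
A graph with at least as many vertices as colours that has a proper colouring also has a surjective
one, because the colour classes can be split further until every colour is used; mapping the loops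
identically extends it to a surjective homomorphism. Conversely, a loop can only be mapped to a
loop, so the irreflexive summand of the target is hit by a vertex of `G`, and connectedness forces
all of `G` into that summand.
-/

namespace SumRel

variable {α α' β β' γ γ' : Type*}
  {r : α → α → Prop} {r' : α' → α' → Prop} {s : β → β → Prop} {s' : β' → β' → Prop}
  {t : γ → γ → Prop} {t' : γ' → γ' → Prop}

/-- The inclusion of the left summand into a disjoint union of relations, as a homomorphism. -/
def inlHom (r : α → α → Prop) (s : β → β → Prop) : r →r SumRel r s where
  toFun := Sum.inl
  map_rel' := id

/-- The homomorphism between disjoint unions that acts as `f` on the left summand and as `g` on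
the right one. -/
def mapHom (f : r →r r') (g : s →r s') : SumRel r s →r SumRel r' s' where
  toFun := Sum.map f g
  map_rel' {x y} hxy := by
    rcases x with a | b <;> rcases y with a' | b'
    · exact f.map_rel hxy
    · exact hxy.elim
    · exact hxy.elim
    · exact g.map_rel hxy

theorem mapHom_surjective {f : r →r r'} {g : s →r s'} (hf : Function.Surjective f)
    (hg : Function.Surjective g) : Function.Surjective (mapHom f g) :=
  hf.sumMap hg

theorem isLeft_eq {x y : α ⊕ β} (hxy : SumRel r s x y) : x.isLeft = y.isLeft := by
  rcases x with a | b <;> rcases y with a' | b'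
  · rfl
  · exact hxy.elim
  · exact hxy.elim
  · rfl

theorem isLeft_map_eq_of_eqvGen (f : r →r SumRel s t) {a b : α} (hab : Relation.EqvGen r a b) :
    (f a).isLeft = (f b).isLeft := by
  induction hab with
  | rel _ _ hr => exact isLeft_eq (f.map_rel hr)
  | refl _ => rfl
  | symm _ _ _ ih => exact ih.symm
  | trans _ _ _ _ _ ih₁ ih₂ => exact ih₁.trans ih₂

theorem exists_relHom_forall_eq_inl (hr : ∀ a b, Relation.EqvGen r a b) (f : r →r SumRel s t)
    {a : α} {b : β} (hab : f a = Sum.inl b) : ∃ g : r →r s, ∀ x, f x = Sum.inl (g x) := by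
  have isLeft_f (x : α) : (f x).isLeft := by
    rw [← isLeft_map_eq_of_eqvGen f (hr a x), hab, Sum.isLeft_inl]
  choose g hg using fun x => Sum.isLeft_iff.mp (isLeft_f x)
  refine ⟨⟨g, fun {x y} hxy => ?_⟩, hg⟩
  have hfxy := f.map_rel hxy
  rwa [hg, hg] at hfxy

theorem exists_eq_inl_of_map_irrefl (hs : ∀ b, s b b) (f : SumRel r s →r t) {x : α ⊕ β}
    (hx : ¬ t (f x) (f x)) : ∃ a, x = Sum.inl a := by
  rcases x with a | b
  · exact ⟨a, rfl⟩
  · have loop_b : SumRel r s (Sum.inr b) (Sum.inr b) := hs b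
    exact absurd (f.map_rel loop_b) hx

theorem nonempty_relHom_of_map_eq_inl_inl (hr : ∀ a b, Relation.EqvGen r a b)
    (hs : ∀ b, s b b) (ht : ∀ c, t c c) (f : SumRel (SumRel r s) t →r SumRel (SumRel r' s') t')
    {x : (α ⊕ β) ⊕ γ} {i : α'} (hi : ¬ r' i i) (hx : f x = Sum.inl (Sum.inl i)) :
    Nonempty (r →r r') := by
  have irrefl_fx : ¬ SumRel (SumRel r' s') t' (f x) (f x) := by
    rw [hx]
    exact hi
  let f₁ := f.comp (inlHom (SumRel r s) t)
  obtain ⟨y, rfl⟩ := exists_eq_inl_of_map_irrefl ht f irrefl_fx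
  obtain ⟨a, rfl⟩ := exists_eq_inl_of_map_irrefl hs f₁ irrefl_fx
  obtain ⟨g, hg⟩ := exists_relHom_forall_eq_inl hr (f₁.comp (inlHom r s)) hx
  obtain ⟨c, -⟩ := exists_relHom_forall_eq_inl hr g (Sum.inl.inj ((hg a).symm.trans hx))
  exact ⟨c⟩

end SumRel

section SurjectiveColoring

open Cardinal

variable {α β γ V ι : Type*}

theorem exists_superset_mk_eq {S B : Set α} (hSB : #S ≤ #B) : ∃ T, S ⊆ T ∧ #T = #B := by
  rcases B.finite_or_infinite with hB | hB
  · have encard_le : S.encard ≤ B.encard := toENat.monotone' hSB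
    obtain ⟨T, hST, -, hT⟩ := Set.exists_superset_subset_encard_eq S.subset_univ encard_le
      (Set.encard_le_encard B.subset_univ)
    have T_finite : T.Finite := Set.encard_lt_top_iff.mp (hT ▸ hB.encard_lt_top)
    exact ⟨T, hST, toENat_injOn T_finite.lt_aleph0.le hB.lt_aleph0.le hT⟩
  · refine ⟨S ∪ B, Set.subset_union_left, le_antisymm ?_ ?_⟩
    · calc #(S ∪ B : Set α) ≤ #S + #B := mk_union_le S B
        _ = #B := add_eq_right (infinite_iff.mp hB.to_subtype) hSB
    · exact mk_le_mk_of_subset Set.subset_union_right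

theorem exists_surjective_factorization (c : α → γ) (i : Set.range c ↪ β) (e : β ↪ α) :
    ∃ g : α → β, Function.Surjective g ∧ ∃ h : β → γ, h ∘ g = c := by
  classical
  -- Retract `α` within the fibres of `c` onto a set `T` that meets every fibre and is in bijection
  -- with `β`.
  let representative := Set.rangeSplitting c
  have mk_le : #(Set.range representative) ≤ #(Set.range e) :=
    ⟨(Equiv.ofInjective _ (Set.rangeSplitting_injective c)).symm.toEmbedding.trans
      (i.trans (Equiv.ofInjective e e.injective).toEmbedding)⟩
  obtain ⟨T, hT, mk_eq⟩ := exists_superset_mk_eq mk_le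
  obtain ⟨φ⟩ := Cardinal.eq.mp mk_eq
  let ψ : T ≃ β := φ.trans (Equiv.ofInjective e e.injective).symm
  let retract (x : α) : T := if hx : x ∈ T then ⟨x, hx⟩ else
    ⟨representative (Set.rangeFactorization c x), hT (Set.mem_range_self _)⟩
  have retract_coe (x : T) : retract x = x := dif_pos x.2
  have apply_retract (x : α) : c (retract x) = c x := by
    by_cases hx : x ∈ T
    · rw [retract_coe ⟨x, hx⟩]
    · simp only [retract, dif_neg hx]
      exact Set.apply_rangeSplitting c _
  refine ⟨ψ ∘ retract, ψ.surjective.comp fun x => ⟨x, retract_coe x⟩, fun b => c (ψ.symm b), ?_⟩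
  funext x
  simp [apply_retract]

theorem exists_surjective_coloring {G : SimpleGraph V} (C : G.Coloring ι) (e : ι ↪ V) :
    ∃ C' : G.Coloring ι, Function.Surjective C' := by
  obtain ⟨g, hg, h, hgC⟩ := exists_surjective_factorization C (Function.Embedding.subtype _) e
  refine ⟨SimpleGraph.Coloring.mk g fun {v w} hvw hgvw => C.valid hvw ?_, hg⟩
  calc C v = h (g v) := (congrFun hgC v).symm
    _ = h (g w) := congrArg h hgvw
    _ = C w := congrFun hgC w

end SurjectiveColoring

theorem colorable_iff_sHom_K3_K1ref_K1ref_general {V ι : Type*} [Nonempty ι] (G : SimpleGraph V)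
    (hconn : G.Preconnected) (e : ι ↪ V) :
    Nonempty (G.Coloring ι) ↔
      (∃ f : (V ⊕ Unit) ⊕ Unit → (ι ⊕ Unit) ⊕ Unit, Function.Surjective f ∧
        ∀ x y, SumRel (SumRel G.Adj (fun _ _ : Unit => True)) (fun _ _ : Unit => True) x y →
          SumRel (SumRel (fun i j : ι => i ≠ j) (fun _ _ : Unit => True))
            (fun _ _ : Unit => True) (f x) (f y)) := by
  constructor
  · rintro ⟨C⟩
    obtain ⟨C', hC'⟩ := exists_surjective_coloring C e
    let c : G.Adj →r (fun i j : ι => i ≠ j) := ⟨C', C'.valid⟩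
    let f := SumRel.mapHom (SumRel.mapHom c (RelHom.id fun _ _ : Unit => True))
      (RelHom.id fun _ _ : Unit => True)
    have hf : Function.Surjective f :=
      SumRel.mapHom_surjective (SumRel.mapHom_surjective hC' Function.surjective_id)
        Function.surjective_id
    exact ⟨f, hf, fun _ _ => f.map_rel⟩
  · rintro ⟨f, hf, hom_f⟩
    have eqvGen_adj (v w : V) : Relation.EqvGen G.Adj v w :=
      Relation.EqvGen.reflTransGen_le_eqvGen _ _ _
        ((G.reachable_iff_reflTransGen v w).mp (hconn v w))
    obtain ⟨i⟩ := ‹Nonempty ι›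
    obtain ⟨x, hx⟩ := hf (Sum.inl (Sum.inl i))
    obtain ⟨c⟩ := SumRel.nonempty_relHom_of_map_eq_inl_inl eqvGen_adj (fun _ => trivial)
      (fun _ => trivial) ⟨f, hom_f _ _⟩ (fun hi => hi rfl) hx
    exact ⟨SimpleGraph.Coloring.mk c c.map_rel⟩

/-- A finite connected graph with at least 3 vertices is 3-colourable iff there is a
surjective homomorphism from `G ⊎ K₁^ref ⊎ K₁^ref` to `K₃ ⊎ K₁^ref ⊎ K₁^ref`. -/
theorem colorable_iff_sHom_K3_K1ref_K1ref {V : Type*} [Fintype V] (G : SimpleGraph V)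
    (hconn : G.Connected) (hcard : 3 ≤ Fintype.card V) :
    G.Colorable 3 ↔
      (∃ f : (V ⊕ Unit) ⊕ Unit → ((Fin 3) ⊕ Unit) ⊕ Unit, Function.Surjective f ∧
        ∀ x y, SumRel (SumRel G.Adj (fun _ _ : Unit => True)) (fun _ _ : Unit => True) x y →
          SumRel (SumRel (fun i j : Fin 3 => i ≠ j) (fun _ _ : Unit => True))
            (fun _ _ : Unit => True) (f x) (f y)) := by
  obtain ⟨e⟩ := Function.Embedding.nonempty_of_card_le ((Fintype.card_fin 3).trans_le hcard)
  exact colorable_iff_sHom_K3_K1ref_K1ref_general G hconn.preconnected e
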